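/- Let η ∈ {1,2} and let q, r, s be primes with q ≡ 3 (mod 4), r ≡ s ≡ 5 (mod 8), Legendre symbols (q/r) = (q/s) = (−1)^{δ_{η,2}} and (r/s) = 1. Let ρ be the element of {1,2} with ρ ≠ η and let (x, y) be the fundamental solution of the Pell equation X² − ρqrs·Y² = 1. Then exactly one of the two natural numbers 2^{δ_{ρ,2}}·q·(x+1) and 2^{δ_{ρ,2}}·q·(x−1) is a perfect square, and there exist integers y₁, y₂ with y = y₁y₂, 2x = ρq·y₁² + rs·y₂² (equivalently √(2·ε_{ρqrs}) = y₁√(ρq) + y₂√(rs)), and moreover 2 = ρq·y₁² − rs·y₂² if 2^{δ_{ρ,2}}·q·(x+1) is a perfect square, while 2 = −ρq·y₁² + rs·y₂² if 2^{δ_{ρ,2}}·q·(x−1) is a perfect square. -/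

import Mathlib

/-- Coprime factors of `d * y ^ 2` split as `a * u ^ 2` and `b * v ^ 2` with `a * b = d`. -/
theorem aux_split (X Z : ℤ) (d : ℕ) (y : ℤ) (hd : 0 < d) (hX : 0 < X) (hZ : 0 < Z) (hy : 0 < y)
    (hc : IsCoprime X Z) (h : X * Z = d * y ^ 2) :
    ∃ a b u v : ℕ, X = a * (u : ℤ) ^ 2 ∧ Z = b * (v : ℤ) ^ 2 ∧ a * b = d ∧ y = u * v ∧
      0 < u ∧ 0 < v := by
  lift X to ℕ using hX.le
  lift Z to ℕ using hZ.le
  lift y to ℕ using hy.le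
  norm_cast at *
  obtain ⟨a, b, ⟨X', rfl⟩, ⟨Z', rfl⟩, rfl⟩ := exists_dvd_and_dvd_of_dvd_mul (Dvd.intro _ h.symm)
  have h2 : X' * Z' = y ^ 2 := by
    apply Nat.eq_of_mul_eq_mul_left hd
    rw [← h]; ring
  have hc' : Nat.Coprime X' Z' := hc.coprime_mul_left.coprime_mul_left_right
  obtain ⟨u, hu⟩ := exists_eq_pow_of_mul_eq_pow (Nat.isUnit_iff.2 hc') h2
  obtain ⟨v, hv⟩ := exists_eq_pow_of_mul_eq_pow (Nat.isUnit_iff.2 hc'.symm)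
    ((mul_comm _ _).trans h2)
  subst hu hv
  have hyu : y = u * v := by
    have : (u * v) ^ 2 = y ^ 2 := by rw [← h2]; ring
    exact (Nat.pow_left_injective (n := 2) (by norm_num) this).symm
  refine ⟨a, b, u, v, rfl, rfl, rfl, hyu, ?_, ?_⟩
  · rcases Nat.eq_zero_or_pos u with rfl | h
    · simp at hX
    · exact h
  · rcases Nat.eq_zero_or_pos v with rfl | h
    · simp at hZ
    · exact h

theorem aux_peel (p : ℕ) (hp : p.Prime) (a b n : ℕ) (h : a * b = n * p) :
    (∃ a', a = a' * p ∧ a' * b = n) ∨ (∃ b', b = b' * p ∧ a * b' = n) := by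
  have : p ∣ a * b := Dvd.intro_left _ h.symm
  rcases hp.dvd_mul.1 this with ⟨c, rfl⟩ | ⟨c, rfl⟩
  · left
    refine ⟨c, mul_comm _ _, Nat.eq_of_mul_eq_mul_right hp.pos ?_⟩
    rw [← h]; ring
  · right
    refine ⟨c, mul_comm _ _, Nat.eq_of_mul_eq_mul_right hp.pos ?_⟩
    rw [← h]; ring

theorem aux_leg (p : ℕ) [Fact p.Prime] (c e u w : ℤ) (h : c * u ^ 2 - e = p * w)
    (hl : legendreSym p c * legendreSym p e = -1) : False := by
  have h1 : legendreSym p (c * u ^ 2) = legendreSym p e := by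
    have : ((c * u ^ 2 : ℤ) : ZMod p) = (e : ZMod p) := by
      have : c * u ^ 2 = e + p * w := by linarith
      rw [this]; simp
    unfold legendreSym
    rw [this]
  rw [legendreSym.mul, pow_two, legendreSym.mul] at h1
  rw [← h1] at hl
  nlinarith [sq_nonneg (legendreSym p c * legendreSym p u)]

theorem aux_two (p : ℕ) [Fact p.Prime] (h : p % 8 = 5) :
    legendreSym p 2 = -1 ∧ legendreSym p (-1) = 1 := by
  have hp2 : p ≠ 2 := by omega
  rw [legendreSym.at_two hp2, legendreSym.at_neg_one hp2]
  constructor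
  · rw [ZMod.χ₈_nat_eq_if_mod_eight]
    simp [h]; omega
  · rw [ZMod.χ₄_nat_one_mod_four (by omega)]

theorem aux_final (ρ q r s : ℕ) (hρ : ρ = 1 ∨ ρ = 2) (hq : 0 < q)
    (x y : ℤ) (hx : 1 < x)
    (hmain : ∃ y₁ y₂ : ℤ, y = y₁ * y₂ ∧
      ((x + 1 = (ρ : ℤ) * q * y₁ ^ 2 ∧ x - 1 = (r : ℤ) * s * y₂ ^ 2) ∨
       (x - 1 = (ρ : ℤ) * q * y₁ ^ 2 ∧ x + 1 = (r : ℤ) * s * y₂ ^ 2))) :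
    let A : Prop := ∃ t : ℤ, 2 ^ (if ρ = 2 then 1 else 0) * (q : ℤ) * (x + 1) = t ^ 2
    let B : Prop := ∃ t : ℤ, 2 ^ (if ρ = 2 then 1 else 0) * (q : ℤ) * (x - 1) = t ^ 2
    Xor' A B ∧
      ∃ y₁ y₂ : ℤ, y = y₁ * y₂ ∧
        2 * x = (ρ : ℤ) * q * y₁ ^ 2 + (r : ℤ) * s * y₂ ^ 2 ∧
        (A → (2 : ℤ) = (ρ : ℤ) * q * y₁ ^ 2 - (r : ℤ) * s * y₂ ^ 2) ∧
        (B → (2 : ℤ) = -((ρ : ℤ) * q * y₁ ^ 2) + (r : ℤ) * s * y₂ ^ 2) := by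
  intro A B
  have hpow : (2 : ℤ) ^ (if ρ = 2 then 1 else 0) = (ρ : ℤ) := by
    rcases hρ with rfl | rfl <;> simp
  have hnot : ¬ (A ∧ B) := by
    rintro ⟨⟨t, ht⟩, ⟨t', ht'⟩⟩
    rw [hpow] at ht ht'
    have hm : 0 < (ρ : ℤ) * q := by
      have : 0 < ρ := by omega
      positivity
    have h1 : ((ρ : ℤ) * q) ^ 2 * (x ^ 2 - 1) = (t * t') ^ 2 := by
      rw [mul_pow t t', ← ht, ← ht']; ring
    have h2 : ((ρ : ℤ) * q) ∣ t * t' := (Int.pow_dvd_pow_iff two_ne_zero).1 (Dvd.intro _ h1)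
    obtain ⟨k, hk⟩ := h2
    rw [hk, mul_pow _ k] at h1
    have h3 : x ^ 2 - 1 = k ^ 2 := mul_left_cancel₀ (pow_ne_zero 2 hm.ne') h1
    have h4 : |k| ^ 2 = k ^ 2 := sq_abs k
    have h5 : 0 ≤ |k| := abs_nonneg k
    have h6 : |k| < x := by nlinarith
    nlinarith
  obtain ⟨y₁, y₂, hy, h | h⟩ := hmain
  · have hA : A := ⟨ρ * q * y₁, by rw [hpow, h.1]; ring⟩
    have hB : ¬ B := fun hB => hnot ⟨hA, hB⟩
    exact ⟨Or.inl ⟨hA, hB⟩, y₁, y₂, hy, by linarith, fun _ => by linarith, fun hB' => absurd hB' hB⟩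
  · have hB : B := ⟨ρ * q * y₁, by rw [hpow, h.1]; ring⟩
    have hA : ¬ A := fun hA => hnot ⟨hA, hB⟩
    exact ⟨Or.inr ⟨hB, hA⟩, y₁, y₂, hy, by linarith, fun hA' => absurd hA' hA, fun _ => by linarith⟩

theorem aux_negone (q : ℕ) [Fact q.Prime] (hq4 : q % 4 = 3) : legendreSym q (-1) = -1 := by
  rw [legendreSym.at_neg_one (by omega), ZMod.χ₄_nat_three_mod_four hq4]

/-- The analysis for odd `x`, `ρ = 1`: no decomposition. -/
theorem aux_odd_one (q r s : ℕ) [Fact q.Prime] [Fact r.Prime] [Fact s.Prime]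
    (hq4 : q % 4 = 3) (hr8 : r % 8 = 5) (hs8 : s % 8 = 5)
    (hqr : legendreSym r q = -1) (hqs : legendreSym s q = -1)
    (hrs : legendreSym s r = 1) (hsr : legendreSym r s = 1) (a b u v : ℕ)
    (hab : a * b = q * r * s)
    (he : (a : ℤ) * u ^ 2 - b * v ^ 2 = 1) : a = 1 := by
  obtain ⟨h2r, h1r⟩ := aux_two r hr8
  obtain ⟨h2s, h1s⟩ := aux_two s hs8
  have h1q := aux_negone q hq4
  rcases aux_peel s Fact.out _ _ _ hab with ⟨a, rfl, hab1⟩ | ⟨b, rfl, hab1⟩ <;>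
  rcases aux_peel r Fact.out _ _ _ hab1 with ⟨a, rfl, hab2⟩ | ⟨b, rfl, hab2⟩ <;>
  rw [← one_mul q] at hab2 <;>
  rcases aux_peel q Fact.out _ _ _ hab2 with ⟨a, rfl, hab3⟩ | ⟨b, rfl, hab3⟩ <;>
  obtain ⟨rfl, rfl⟩ := mul_eq_one.1 hab3 <;> push_cast at he
  · exact (aux_leg q (-1) 1 v (-(r * s * u ^ 2)) (by linear_combination he)
      (by simp [h1q])).elim
  · exact (aux_leg r (-1 * q) 1 v (-(s * u ^ 2)) (by linear_combination he)
      (by (try simp only [legendreSym.mul]); simp [*])).elim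
  · exact (aux_leg r (q * s) 1 u (v ^ 2) (by linear_combination he)
      (by (try simp only [legendreSym.mul]); simp [*])).elim
  · exact (aux_leg s (-1 * (q * r)) 1 v (-(u ^ 2)) (by linear_combination he)
      (by (try simp only [legendreSym.mul]); simp [*])).elim
  · exact (aux_leg s (q * r) 1 u (v ^ 2) (by linear_combination he)
      (by (try simp only [legendreSym.mul]); simp [*])).elim
  · exact (aux_leg r (-1 * (q * s)) 1 v (-(u ^ 2)) (by linear_combination he)
      (by (try simp only [legendreSym.mul]); simp [*])).elim
  · exact (aux_leg r q 1 u (s * v ^ 2) (by linear_combination he)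
      (by (try simp only [legendreSym.mul]); simp [*])).elim
  · rfl

theorem aux_even_one (q r s : ℕ) [Fact q.Prime] [Fact r.Prime] [Fact s.Prime]
    (hr8 : r % 8 = 5) (hs8 : s % 8 = 5)
    (hrs : legendreSym s r = 1) (hsr : legendreSym r s = 1) (a b u v : ℕ)
    (hab : a * b = q * r * s)
    (he : (a : ℤ) * u ^ 2 - b * v ^ 2 = 2) : (a = q ∧ b = r * s) ∨ (a = r * s ∧ b = q) := by
  obtain ⟨h2r, h1r⟩ := aux_two r hr8
  obtain ⟨h2s, h1s⟩ := aux_two s hs8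
  rcases aux_peel s Fact.out _ _ _ hab with ⟨a, rfl, hab1⟩ | ⟨b, rfl, hab1⟩ <;>
  rcases aux_peel r Fact.out _ _ _ hab1 with ⟨a, rfl, hab2⟩ | ⟨b, rfl, hab2⟩ <;>
  rw [← one_mul q] at hab2 <;>
  rcases aux_peel q Fact.out _ _ _ hab2 with ⟨a, rfl, hab3⟩ | ⟨b, rfl, hab3⟩ <;>
  obtain ⟨rfl, rfl⟩ := mul_eq_one.1 hab3 <;> push_cast at he
  · exact (aux_leg r (-1) 2 v (-(q * s * u ^ 2)) (by linear_combination he)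
      (by simp [*])).elim
  · right; simp
  · exact (aux_leg s (-1 * r) 2 v (-(q * u ^ 2)) (by linear_combination he)
      (by (try simp only [legendreSym.mul]); simp [*])).elim
  · exact (aux_leg r s 2 u (q * v ^ 2) (by linear_combination he)
      (by (try simp only [legendreSym.mul]); simp [*])).elim
  · exact (aux_leg r (-1 * s) 2 v (-(q * u ^ 2)) (by linear_combination he)
      (by (try simp only [legendreSym.mul]); simp [*])).elim
  · exact (aux_leg s r 2 u (q * v ^ 2) (by linear_combination he)
      (by (try simp only [legendreSym.mul]); simp [*])).elim
  · left; simp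
  · exact (aux_leg r 1 2 u (q * s * v ^ 2) (by linear_combination he)
      (by (try simp only [legendreSym.mul]); simp [*])).elim

theorem aux_odd_two (q r s : ℕ) [Fact q.Prime] [Fact r.Prime] [Fact s.Prime]
    (hq4 : q % 4 = 3) (hr8 : r % 8 = 5) (hs8 : s % 8 = 5)
    (hqr : legendreSym r q = 1) (hqs : legendreSym s q = 1)
    (hrs : legendreSym s r = 1) (hsr : legendreSym r s = 1) (a b u v : ℕ)
    (hab : a * b = 2 * q * r * s)
    (he : (a : ℤ) * u ^ 2 - b * v ^ 2 = 1) :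
    a = 1 ∨ (a = q ∧ b = 2 * r * s) ∨ (a = 2 * r * s ∧ b = q) := by
  obtain ⟨h2r, h1r⟩ := aux_two r hr8
  obtain ⟨h2s, h1s⟩ := aux_two s hs8
  have h1q := aux_negone q hq4
  rcases aux_peel s Fact.out _ _ _ hab with ⟨a, rfl, hab1⟩ | ⟨b, rfl, hab1⟩ <;>
  rcases aux_peel r Fact.out _ _ _ hab1 with ⟨a, rfl, hab2⟩ | ⟨b, rfl, hab2⟩ <;>
  rcases aux_peel q Fact.out _ _ _ hab2 with ⟨a, rfl, hab3⟩ | ⟨b, rfl, hab3⟩ <;>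
  rw [← one_mul 2] at hab3 <;>
  rcases aux_peel 2 Nat.prime_two _ _ _ hab3 with ⟨a, rfl, hab4⟩ | ⟨b, rfl, hab4⟩ <;>
  obtain ⟨rfl, rfl⟩ := mul_eq_one.1 hab4 <;> push_cast at he
  -- a contains r, s
  · exact (aux_leg q (-1) 1 v (-(2 * r * s * u ^ 2)) (by linear_combination he)
      (by simp [h1q])).elim
  · exact (aux_leg r (-1 * 2) 1 v (-(q * s * u ^ 2)) (by linear_combination he)
      (by simp only [legendreSym.mul]; simp [*])).elim
  · right; right; simp
  · exact (aux_leg r (-1 * (2 * q)) 1 v (-(s * u ^ 2)) (by linear_combination he)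
      (by simp only [legendreSym.mul]; simp [*])).elim
  -- a contains s, b contains r
  · exact (aux_leg r (2 * q * s) 1 u (v ^ 2) (by linear_combination he)
      (by simp only [legendreSym.mul]; simp [*])).elim
  · exact (aux_leg s (-1 * (2 * r)) 1 v (-(q * u ^ 2)) (by linear_combination he)
      (by simp only [legendreSym.mul]; simp [*])).elim
  · exact (aux_leg r (2 * s) 1 u (q * v ^ 2) (by linear_combination he)
      (by simp only [legendreSym.mul]; simp [*])).elim
  · exact (aux_leg s (-1 * (2 * q * r)) 1 v (-(u ^ 2)) (by linear_combination he)
      (by simp only [legendreSym.mul]; simp [*])).elim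
  -- a contains r, b contains s
  · exact (aux_leg s (2 * q * r) 1 u (v ^ 2) (by linear_combination he)
      (by simp only [legendreSym.mul]; simp [*])).elim
  · exact (aux_leg r (-1 * (2 * s)) 1 v (-(q * u ^ 2)) (by linear_combination he)
      (by simp only [legendreSym.mul]; simp [*])).elim
  · exact (aux_leg s (2 * r) 1 u (q * v ^ 2) (by linear_combination he)
      (by simp only [legendreSym.mul]; simp [*])).elim
  · exact (aux_leg r (-1 * (2 * q * s)) 1 v (-(u ^ 2)) (by linear_combination he)
      (by simp only [legendreSym.mul]; simp [*])).elim
  -- b contains r, s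
  · exact (aux_leg r (2 * q) 1 u (s * v ^ 2) (by linear_combination he)
      (by simp only [legendreSym.mul]; simp [*])).elim
  · right; left; simp
  · exact (aux_leg r 2 1 u (q * s * v ^ 2) (by linear_combination he)
      (by simp [*])).elim
  · left; rfl

/-- Decomposition for odd `x`, including the use of minimality. -/
theorem aux_odd (d : ℕ) (hd : 0 < d) (hd4 : d % 4 ≠ 0) (x y : ℤ) (hx : 1 < x) (hy : 0 < y)
    (hodd : x % 2 = 1)
    (hPell : x ^ 2 - d * y ^ 2 = 1)
    (hfund : ∀ a b : ℤ, 0 < a → 0 < b → a ^ 2 - d * b ^ 2 = 1 → x ≤ a) :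
    ∃ a b u v : ℕ, x + 1 = 2 * (a * (u : ℤ) ^ 2) ∧ x - 1 = 2 * (b * (v : ℤ) ^ 2) ∧
      a * b = d ∧ y = 2 * (u * v) ∧ a ≠ 1 := by
  obtain ⟨X, rfl⟩ : ∃ X, x = 2 * X - 1 := ⟨(x + 1) / 2, by omega⟩
  have hy2 : y % 2 = 0 := by
    by_contra hne
    obtain ⟨k, rfl⟩ : ∃ k, y = 2 * k + 1 := ⟨y / 2, by omega⟩
    have h : (d : ℤ) = 4 * (X ^ 2 - X - d * (k ^ 2 + k)) := by linarith
    have : (d : ℤ) % 4 = 0 := by omega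
    omega
  obtain ⟨Y, rfl⟩ : ∃ Y, y = 2 * Y := ⟨y / 2, by omega⟩
  obtain ⟨a, b, u, v, h1, h2, h3, h4, hu, hv⟩ := aux_split X (X - 1) d Y hd (by omega) (by omega)
    (by omega) ⟨1, -1, by ring⟩ (by linarith)
  refine ⟨a, b, u, v, by rw [← h1]; ring, by rw [← h2]; ring, h3, by rw [h4], ?_⟩
  rintro rfl
  rw [one_mul] at h3
  subst h3
  have h5 := hfund u v (by exact_mod_cast hu) (by exact_mod_cast hv) (by push_cast at h1; linarith)
  have : (0 : ℤ) < u := by exact_mod_cast hu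
  push_cast at h1
  nlinarith

theorem statement_7 (η ρ q r s : ℕ) [Fact q.Prime] [Fact r.Prime] [Fact s.Prime]
    (hηρ : (η = 1 ∧ ρ = 2) ∨ (η = 2 ∧ ρ = 1))
    (hq4 : q % 4 = 3) (hr8 : r % 8 = 5) (hs8 : s % 8 = 5)
    (hqr : legendreSym r q = (-1) ^ (if η = 2 then 1 else 0))
    (hqs : legendreSym s q = (-1) ^ (if η = 2 then 1 else 0))
    (hrs : legendreSym s r = 1)
    (x y : ℤ) (hx : 0 < x) (hy : 0 < y)
    (hPell : x ^ 2 - (ρ * q * r * s : ℕ) * y ^ 2 = 1)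
    (hfund : ∀ a b : ℤ, 0 < a → 0 < b → a ^ 2 - (ρ * q * r * s : ℕ) * b ^ 2 = 1 → x ≤ a) :
    let A : Prop := ∃ t : ℤ, 2 ^ (if ρ = 2 then 1 else 0) * (q : ℤ) * (x + 1) = t ^ 2
    let B : Prop := ∃ t : ℤ, 2 ^ (if ρ = 2 then 1 else 0) * (q : ℤ) * (x - 1) = t ^ 2
    Xor' A B ∧
      ∃ y₁ y₂ : ℤ, y = y₁ * y₂ ∧
        2 * x = (ρ : ℤ) * q * y₁ ^ 2 + (r : ℤ) * s * y₂ ^ 2 ∧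
        (A → (2 : ℤ) = (ρ : ℤ) * q * y₁ ^ 2 - (r : ℤ) * s * y₂ ^ 2) ∧
        (B → (2 : ℤ) = -((ρ : ℤ) * q * y₁ ^ 2) + (r : ℤ) * s * y₂ ^ 2) := by
  have hq0 : 0 < q := by omega
  have hr0 : 0 < r := by omega
  have hs0 : 0 < s := by omega
  have hρ0 : 0 < ρ := by omega
  have hd : 0 < ρ * q * r * s := by positivity
  have hsr : legendreSym r s = 1 := by
    rw [← hrs]
    exact legendreSym.quadratic_reciprocity_one_mod_four (by omega) (by omega)
  have hqrs : (q * r * s) % 2 = 1 := by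
    simp [Nat.mul_mod, show q % 2 = 1 by omega, show r % 2 = 1 by omega, show s % 2 = 1 by omega]
  have hx1 : 1 < x := by
    have h1 : (0 : ℤ) < (ρ * q * r * s : ℕ) := by exact_mod_cast hd
    have h2 : 0 < ((ρ * q * r * s : ℕ) : ℤ) * y ^ 2 := by positivity
    nlinarith
  refine aux_final ρ q r s (by omega) hq0 x y hx1 ?_
  rcases hηρ with ⟨rfl, rfl⟩ | ⟨rfl, rfl⟩
  · simp at hqr hqs
    have hodd : x % 2 = 1 := by
      by_contra hne
      obtain ⟨k, rfl⟩ : ∃ k, x = 2 * k := ⟨x / 2, by omega⟩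
      push_cast at hPell
      have : 2 * (2 * k ^ 2 - q * r * s * y ^ 2) = 1 := by linarith
      omega
    have hd4 : (2 * q * r * s) % 4 ≠ 0 := by
      have : 2 * q * r * s = 2 * (q * r * s) := by ring
      omega
    obtain ⟨a, b, u, v, h1, h2, h3, h4, h5⟩ := aux_odd _ hd hd4 x y hx1 hy hodd hPell hfund
    rcases aux_odd_two q r s hq4 hr8 hs8 hqr hqs hrs hsr a b u v h3 (by linarith) with
      h | ⟨rfl, rfl⟩ | ⟨rfl, rfl⟩
    · exact absurd h h5
    · refine ⟨u, 2 * v, by rw [h4]; ring, Or.inl ⟨?_, ?_⟩⟩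
      · rw [h1]; push_cast; ring
      · rw [h2]; push_cast; ring
    · refine ⟨v, 2 * u, by rw [h4]; ring, Or.inr ⟨?_, ?_⟩⟩
      · rw [h2]; push_cast; ring
      · rw [h1]; push_cast; ring
  · simp at hqr hqs
    have e1 : 1 * q * r * s = q * r * s := by ring
    rw [e1] at hPell hfund hd
    rcases Int.emod_two_eq_zero_or_one x with hev | hodd
    · obtain ⟨k, hk⟩ : ∃ k, x = 2 * k := ⟨x / 2, by omega⟩
      obtain ⟨a, b, u, v, h1, h2, h3, h4, hu, hv⟩ := aux_split (x + 1) (x - 1) _ y hd (by omega)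
        (by omega) hy ⟨k, -k - 1, by subst hk; ring⟩ (by linarith)
      rcases aux_even_one q r s hr8 hs8 hrs hsr a b u v h3 (by linarith) with
        ⟨rfl, rfl⟩ | ⟨rfl, rfl⟩
      · refine ⟨u, v, h4, Or.inl ⟨?_, ?_⟩⟩
        · rw [h1]; push_cast; ring
        · rw [h2]; push_cast; ring
      · refine ⟨v, u, by rw [h4]; ring, Or.inr ⟨?_, ?_⟩⟩
        · rw [h2]; push_cast; ring
        · rw [h1]; push_cast; ring
    · obtain ⟨a, b, u, v, h1, h2, h3, h4, h5⟩ := aux_odd _ hd (by omega) x y hx1 hy hodd hPell hfund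
      exact absurd (aux_odd_one q r s hq4 hr8 hs8 hqr hqs hrs hsr a b u v h3 (by linarith)) h5
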